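/- arXiv:math/9905125 — 3 statements merged into one kernel-verified Lean document; each statement's English description precedes it below -/
import Mathlib

section
/- Let R be a unique factorization domain and 𝒜 a finite set of nonzero elements of R such that no element of 𝒜 divides another. If σ ⊆ 𝒜 has the property that every τ ⊆ 𝒜 whose least common multiple is associated to that of σ equals σ, then for every a ∈ σ the subset σ∖{a} has the same property. -/
/-! Taking the union with a fixed set preserves equality of lcms. Let `σ` be a Scarf face, `ρ ⊆ σ`,
and let `τ` have the same lcm as `ρ`. Then `τ ∪ (σ \ ρ)` has the lcm of `ρ ∪ (σ \ ρ) = σ`, hence is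
equal to `σ`, so that `ρ ⊆ τ ⊆ σ`. Since now `τ ⊆ σ`, the same argument with `ρ` and `τ` exchanged
gives `τ ⊆ ρ`. -/

section CommonMultiples

variable {M : Type*}

/-- The common (right) multiples of the elements of `s`. They stand in for the lcm of `s`, which
they determine up to association in a left cancellative monoid with zero, so that sets can be
compared without choosing lcms. -/
def commonMultiples [Dvd M] (s : Set M) : Set M :=
  {t | ∀ a ∈ s, a ∣ t}

theorem commonMultiples_union [Dvd M] (s t : Set M) :
    commonMultiples (s ∪ t) = commonMultiples s ∩ commonMultiples t :=
  Set.ext fun _ => forall₂_or_left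

/-- `m` is a least common multiple of `s` with respect to divisibility. -/
def IsLcm [Dvd M] (s : Set M) (m : M) : Prop :=
  m ∈ commonMultiples s ∧ ∀ t ∈ commonMultiples s, m ∣ t

theorem IsLcm.commonMultiples_eq [Semigroup M] {s : Set M} {m : M} (hm : IsLcm s m) :
    commonMultiples s = {t | m ∣ t} :=
  Set.Subset.antisymm hm.2 fun _ hmt a ha => (hm.1 a ha).trans hmt

theorem IsLcm.associated_iff [MonoidWithZero M] [IsLeftCancelMulZero M] {s t : Set M} {m n : M}
    (hm : IsLcm s m) (hn : IsLcm t n) :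
    Associated m n ↔ commonMultiples s = commonMultiples t := by
  rw [hm.commonMultiples_eq, hn.commonMultiples_eq, Set.ext_iff]
  constructor
  · exact fun h _ => h.dvd_iff_dvd_left
  · exact fun h => associated_of_dvd_dvd ((h n).2 dvd_rfl) ((h m).1 dvd_rfl)

end CommonMultiples

section Scarf

variable {M : Type*}

/-- `σ` is a face of the Scarf complex of `A`: a finite subset of `A` that shares its lcm with no
other finite subset of `A`. Sharing an lcm is encoded as having the same common multiples. -/
def IsScarf [Dvd M] (A : Set M) (σ : Finset M) : Prop :=
  ↑σ ⊆ A ∧ ∀ τ : Finset M, ↑τ ⊆ A → commonMultiples (τ : Set M) = commonMultiples ↑σ → τ = σ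

variable {A : Set M} {ρ σ τ : Finset M}

theorem isScarf_iff_of_isLcm [MonoidWithZero M] [IsLeftCancelMulZero M] {L : Finset M → M}
    (hL : ∀ τ : Finset M, ↑τ ⊆ A → IsLcm ↑τ (L τ)) (hσ : ↑σ ⊆ A) :
    IsScarf A σ ↔ ∀ τ : Finset M, ↑τ ⊆ A → Associated (L τ) (L σ) → τ = σ := by
  rw [IsScarf, and_iff_right hσ]
  refine forall₂_congr fun τ hτ => ?_
  rw [(hL τ hτ).associated_iff (hL σ hσ)]

theorem IsScarf.union_sdiff_eq [Dvd M] [DecidableEq M] (hσ : IsScarf A σ) (hρσ : ρ ⊆ σ)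
    (hτA : ↑τ ⊆ A) (hτρ : commonMultiples (τ : Set M) = commonMultiples ↑ρ) :
    τ ∪ σ \ ρ = σ := by
  apply hσ.2
  · rw [Finset.coe_union]
    exact Set.union_subset hτA ((Finset.coe_subset.2 Finset.sdiff_subset).trans hσ.1)
  · calc commonMultiples (↑(τ ∪ σ \ ρ) : Set M)
        = commonMultiples ↑τ ∩ commonMultiples ↑(σ \ ρ) := by
          rw [Finset.coe_union, commonMultiples_union]
      _ = commonMultiples ↑(ρ ∪ σ \ ρ) := by
          rw [hτρ, Finset.coe_union, commonMultiples_union]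
      _ = commonMultiples ↑σ := by rw [Finset.union_sdiff_of_subset hρσ]

theorem IsScarf.subset_and_subset_of_commonMultiples_eq [Dvd M] (hσ : IsScarf A σ) (hρσ : ρ ⊆ σ)
    (hτA : ↑τ ⊆ A) (hτρ : commonMultiples (τ : Set M) = commonMultiples ↑ρ) :
    ρ ⊆ τ ∧ τ ⊆ σ := by
  classical
  have hunion : τ ∪ σ \ ρ = σ := hσ.union_sdiff_eq hρσ hτA hτρ
  exact ⟨Finset.disjoint_sdiff.left_le_of_le_sup_right (hρσ.trans hunion.ge),
    Finset.union_subset_left hunion.le⟩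

theorem IsScarf.mono [Dvd M] (hσ : IsScarf A σ) (hρσ : ρ ⊆ σ) : IsScarf A ρ := by
  have hρA : ↑ρ ⊆ A := (Finset.coe_subset.2 hρσ).trans hσ.1
  refine ⟨hρA, fun τ hτA hτρ => ?_⟩
  obtain ⟨hρτ, hτσ⟩ := hσ.subset_and_subset_of_commonMultiples_eq hρσ hτA hτρ
  obtain ⟨hτρ_subset, -⟩ := hσ.subset_and_subset_of_commonMultiples_eq hτσ hρA hτρ.symm
  exact hτρ_subset.antisymm hρτ

theorem erase_scarf_of_scarf_general [MonoidWithZero M] [IsLeftCancelMulZero M]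
    {L : Finset M → M} (hL : ∀ τ : Finset M, ↑τ ⊆ A → IsLcm ↑τ (L τ)) (hσ : ↑σ ⊆ A)
    (hscarf : ∀ τ : Finset M, ↑τ ⊆ A → Associated (L τ) (L σ) → τ = σ) (hρσ : ρ ⊆ σ) :
    ∀ τ : Finset M, ↑τ ⊆ A → Associated (L τ) (L ρ) → τ = ρ :=
  have hρ : IsScarf A ρ := ((isScarf_iff_of_isLcm hL hσ).2 hscarf).mono hρσ
  (isScarf_iff_of_isLcm hL hρ.1).1 hρ

end Scarf

/-- Let `R` be a UFD and `𝒜` a finite set of nonzero elements of `R`,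
none dividing another.  If `σ ⊆ 𝒜` is such that every `τ ⊆ 𝒜` whose lcm is associated
to that of `σ` equals `σ`, then for every `a ∈ σ` the subset `σ ∖ {a}` has the same
property.  Here `L` chooses a least common multiple of each subset of `𝒜`. -/
theorem erase_scarf_of_scarf (R : Type*) [CommRing R] [IsDomain R]
    [UniqueFactorizationMonoid R] [DecidableEq R]
    (A : Finset R) (hA0 : (0 : R) ∉ A)
    (hdvd : ∀ a ∈ A, ∀ b ∈ A, a ≠ b → ¬ a ∣ b)
    (L : Finset R → R)
    (hLdvd : ∀ σ ⊆ A, ∀ a ∈ σ, a ∣ L σ)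
    (hLlcm : ∀ σ ⊆ A, ∀ t : R, (∀ a ∈ σ, a ∣ t) → L σ ∣ t)
    (σ : Finset R) (hσ : σ ⊆ A)
    (hscarf : ∀ τ ⊆ A, Associated (L τ) (L σ) → τ = σ)
    (a : R) (ha : a ∈ σ) :
    ∀ τ ⊆ A, Associated (L τ) (L (σ.erase a)) → τ = σ.erase a :=
  erase_scarf_of_scarf_general (fun τ hτ => ⟨hLdvd τ hτ, hLlcm τ hτ⟩) hσ hscarf
    (Finset.erase_subset a σ)
end

section
/- Let E be a set of pairwise non-associated irreducible polynomials of S containing all irreducible factors of every element of 𝒜. If every finite sequence of distinct elements of E is a regular sequence on S, then the Taylor complex of 𝒜 is a resolution of S/I. -/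
open Finset

noncomputable section

/-- Degree-`p` term of the Taylor complex: the free `S`-module on the `p`-element
subsets of the index set `Fin m`. -/
abbrev TaylorMod (k : Type) [Field k] (n m p : ℕ) : Type :=
  {σ : Finset (Fin m) // σ.card = p} →₀ MvPolynomial (Fin n) k

/-- The Taylor differential, sending a `p`-element subset `σ` to
`∑_{i ∈ σ} (-1)^{ε(σ,i)} (Q_σ / Q_{σ∖{i}}) (σ∖{i})`, where `c σ i` is the quotient
`Q_σ / Q_{σ∖{i}}`. -/
def taylorD (k : Type) [Field k] (n m : ℕ)
    (c : Finset (Fin m) → Fin m → MvPolynomial (Fin n) k) (p : ℕ) :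
    TaylorMod k n m p →ₗ[MvPolynomial (Fin n) k] TaylorMod k n m (p - 1) :=
  Finsupp.lsum (MvPolynomial (Fin n) k) fun σ =>
    LinearMap.toSpanSingleton _ _
      (∑ i ∈ σ.1.attach,
        Finsupp.single
          ⟨σ.1.erase i.1, by rw [Finset.card_erase_of_mem i.2, σ.2]⟩
          ((-1) ^ (σ.1.filter (fun j => j < i.1)).card * c σ.1 i.1))

/-- The identification of the degree-`0` term of the Taylor complex with `S`. -/
def taylorAug (k : Type) [Field k] (n m : ℕ) :
    TaylorMod k n m 0 →ₗ[MvPolynomial (Fin n) k] MvPolynomial (Fin n) k :=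
  Finsupp.lsum (MvPolynomial (Fin n) k) fun _ => LinearMap.id

/-- The Taylor complex (built from the quotient data `c`) is a resolution of `S/I`:
it is exact in all degrees `p ≥ 1` and the image of its first differential is the
ideal generated by `Q`. -/
def IsTaylorResolution (k : Type) [Field k] (n m : ℕ) (Q : Fin m → MvPolynomial (Fin n) k)
    (c : Finset (Fin m) → Fin m → MvPolynomial (Fin n) k) : Prop :=
  (∀ p : ℕ, 1 ≤ p →
      LinearMap.ker (taylorD k n m c p) = LinearMap.range (taylorD k n m c (p + 1))) ∧
  Submodule.map (taylorAug k n m) (LinearMap.range (taylorD k n m c 1)) =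
    Ideal.span (Set.range Q)

end

/-!
Ordering `𝒜` so that `Q_a` comes last, the Taylor complex of `𝒜 = 𝒜' ∪ {Q_a}` is a mapping cone
over the subsets `τ` of `𝒜'`: its target has the weights `Q_{τ ∪ i} / Q_τ`, its source the weights
`Q_{τ ∪ a ∪ i} / Q_{τ ∪ a}`. Both are complexes of the same shape on one element fewer, so exactness
follows by induction once the weights satisfy, at every `τ`, the colon inclusion
`(Q_{τ ∪ i} / Q_τ : i) : (Q_{τ ∪ a} / Q_τ) ⊆ (Q_{τ ∪ a ∪ i} / Q_{τ ∪ a} : i)`,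
which makes the connecting map injective on `H₀`.

Up to units the `Q_i` are monomials in the members of `E`. Since finite sequences in `E` are
regular, least common multiples and colon ideals of such monomials are computed on exponents, as
they are for monomials in independent variables; with `e` the exponents, both sides of the colon
inclusion then have the generators of exponent `e i - (e a ⊔ sup_τ e)`.
-/

section Monomials

/-- The monomial `∏ i ∈ s, x i` in a family `x`; the exponent vector is encoded as a multiset `s`,
so that divisibility and least common multiples of monomials become `≤` and `⊔`. -/
def monomialProd {M ι : Type*} [CommMonoid M] (x : ι → M) (s : Multiset ι) : M :=
  (s.map x).prod

section CommMonoid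
variable {M ι : Type*} [CommMonoid M] (x : ι → M)

lemma monomialProd_zero : monomialProd x 0 = 1 := by
  simp [monomialProd]

lemma monomialProd_cons (i : ι) (s : Multiset ι) :
    monomialProd x (i ::ₘ s) = x i * monomialProd x s := by
  simp [monomialProd]

lemma monomialProd_add (s t : Multiset ι) :
    monomialProd x (s + t) = monomialProd x s * monomialProd x t := by
  simp [monomialProd]

lemma monomialProd_dvd_of_le {s t : Multiset ι} (h : s ≤ t) :
    monomialProd x s ∣ monomialProd x t :=
  Multiset.prod_dvd_prod_of_le (Multiset.map_le_map h)

lemma dvd_monomialProd_of_mem {i : ι} {s : Multiset ι} (h : i ∈ s) : x i ∣ monomialProd x s :=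
  Multiset.dvd_prod (Multiset.mem_map_of_mem x h)

end CommMonoid

lemma exists_associated_monomialProd {M : Type*} [CommMonoidWithZero M]
    [UniqueFactorizationMonoid M] (E : Set M) {q : M} (hq : q ≠ 0)
    (hfac : ∀ z, Irreducible z → z ∣ q → ∃ w ∈ E, Associated z w) :
    ∃ s : Multiset E, Associated q (monomialProd (↑) s) := by
  induction q using UniqueFactorizationMonoid.induction_on_prime with
  | h₁ => exact absurd rfl hq
  | h₂ u hu => exact ⟨0, by rwa [monomialProd_zero, associated_one_iff_isUnit]⟩
  | h₃ b p hb hp ih =>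
    obtain ⟨s, hs⟩ := ih hb fun z hz hzb => hfac z hz (hzb.mul_left p)
    obtain ⟨w, hw, hpw⟩ := hfac p hp.irreducible (dvd_mul_right p b)
    exact ⟨⟨w, hw⟩ ::ₘ s, by simpa only [monomialProd_cons] using hpw.mul_mul hs⟩

variable {R ι α : Type*} [CommRing R]

/-- A family `x` is regular if each `x z` is a nonzerodivisor modulo any finite set of the other
members; equivalently, every finite sequence of members with distinct indices is weakly regular. -/
def IsRegularFamily (x : ι → R) : Prop :=
  ∀ (V : Finset ι), ∀ z ∉ V, ∀ f, x z * f ∈ Ideal.span (x '' V) → f ∈ Ideal.span (x '' V)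

lemma isRegularFamily_coe {E : Set R}
    (hE : ∀ l : List R, (∀ z ∈ l, z ∈ E) → l.Nodup → RingTheory.Sequence.IsWeaklyRegular R l) :
    IsRegularFamily ((↑) : E → R) := by
  intro V z hz f hf
  have hreg := hE ((V.toList ++ [z]).map (↑)) (by
    intro y hy
    obtain ⟨w, _, rfl⟩ := List.mem_map.1 hy
    exact w.2) (by
    refine List.Nodup.map Subtype.val_injective (List.nodup_append.2 ⟨V.nodup_toList, ?_, ?_⟩)
    · exact List.nodup_singleton z
    · rintro a ha b hb rfl
      exact hz (mem_toList.1 (List.mem_singleton.1 hb ▸ ha)))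
  rw [List.map_append, RingTheory.Sequence.isWeaklyRegular_append_iff, List.map_singleton,
    RingTheory.Sequence.isWeaklyRegular_singleton_iff] at hreg
  have hspan : Ideal.ofList (V.toList.map ((↑) : E → R)) • (⊤ : Submodule R R) =
      Ideal.span ((↑) '' (V : Set E)) := by
    rw [smul_eq_mul, Ideal.mul_top, Ideal.ofList]
    congr 1
    ext y
    simp
  rw [hspan] at hreg
  exact mem_of_isSMulRegular_quotient_of_smul_mem hreg.2 hf

lemma IsRegularFamily.monomialProd_ne_zero [IsDomain R] {x : ι → R} (hx : IsRegularFamily x)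
    (s : Multiset ι) : monomialProd x s ≠ 0 := by
  have hx₀ : ∀ i, x i ≠ 0 := fun i hi => one_ne_zero (α := R) (by
    simpa [hi] using hx ∅ i (notMem_empty i) 1)
  simpa [monomialProd, Multiset.prod_eq_zero_iff] using fun i _ => hx₀ i

lemma span_image_le_of_dvd {W : Set α} {f g : α → R} (h : ∀ i ∈ W, g i ∣ f i) :
    Ideal.span (f '' W) ≤ Ideal.span (g '' W) := by
  rw [Ideal.span_le]
  rintro _ ⟨i, hi, rfl⟩
  exact Ideal.mem_of_dvd _ (h i hi) (Ideal.subset_span ⟨i, hi, rfl⟩)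

lemma span_image_eq_of_associated {W : Set α} {f g : α → R} (h : ∀ i ∈ W, Associated (f i) (g i)) :
    Ideal.span (f '' W) = Ideal.span (g '' W) :=
  le_antisymm (span_image_le_of_dvd fun i hi => (h i hi).symm.dvd)
    (span_image_le_of_dvd fun i hi => (h i hi).dvd)

/-- The ideal generated by the variables `x v`, `v ∈ V`, and the monomials with exponents `e i`,
`i ∈ W`. -/
def monomialIdeal (x : ι → R) (V : Finset ι) (W : Finset α) (e : α → Multiset ι) : Ideal R :=
  Ideal.span (x '' V ∪ (fun i => monomialProd x (e i)) '' W)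

lemma var_mem_monomialIdeal (x : ι → R) {V : Finset ι} {v : ι} (hv : v ∈ V) (W : Finset α)
    (e : α → Multiset ι) : x v ∈ monomialIdeal x V W e :=
  Ideal.subset_span (Or.inl ⟨v, hv, rfl⟩)

lemma monomialProd_mem_monomialIdeal (x : ι → R) (V : Finset ι) {W : Finset α} {i : α}
    (hi : i ∈ W) (e : α → Multiset ι) : monomialProd x (e i) ∈ monomialIdeal x V W e :=
  Ideal.subset_span (Or.inr ⟨i, hi, rfl⟩)

lemma monomialIdeal_insert_var [DecidableEq ι] (x : ι → R) (w : ι) (V : Finset ι) (W : Finset α)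
    (e : α → Multiset ι) :
    monomialIdeal x (insert w V) W e = Ideal.span {x w} ⊔ monomialIdeal x V W e := by
  simp only [monomialIdeal, coe_insert, Set.image_insert_eq, Set.insert_union, Ideal.span_insert]

lemma monomialIdeal_insert [DecidableEq α] (x : ι → R) (V : Finset ι) (a : α) (W : Finset α)
    (e : α → Multiset ι) :
    monomialIdeal x V (insert a W) e =
      Ideal.span {monomialProd x (e a)} ⊔ monomialIdeal x V W e := by
  simp only [monomialIdeal, coe_insert, Set.image_insert_eq, Set.union_insert, Ideal.span_insert]

variable [DecidableEq ι]

lemma monomialProd_mul_mem_monomialIdeal (x : ι → R) (V : Finset ι) (W : Finset α)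
    (e : α → Multiset ι) (s : Multiset ι) {g : R}
    (hg : g ∈ monomialIdeal x V W fun i => e i - s) :
    monomialProd x s * g ∈ monomialIdeal x V W e := by
  suffices h : monomialIdeal x V W (fun i => e i - s) ≤
      Submodule.comap (LinearMap.mulLeft R (monomialProd x s)) (monomialIdeal x V W e) from h hg
  refine Ideal.span_le.2 (Set.union_subset ?_ ?_)
  · rintro _ ⟨v, hv, rfl⟩
    exact Ideal.mul_mem_left _ _ (var_mem_monomialIdeal x hv W e)
  · rintro _ ⟨i, hi, rfl⟩
    have hdvd : monomialProd x (e i) ∣ monomialProd x s * monomialProd x (e i - s) := by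
      rw [← monomialProd_add]
      exact monomialProd_dvd_of_le x le_add_tsub
    exact (monomialIdeal x V W e).mem_of_dvd hdvd (monomialProd_mem_monomialIdeal x V hi e)

lemma mem_monomialIdeal_of_monomialProd_mul_mem {x : ι → R} {W : Finset α}
    (hvar : ∀ (V : Finset ι) (e : α → Multiset ι), ∀ w ∉ V, ∀ f,
      x w * f ∈ monomialIdeal x V W e → f ∈ monomialIdeal x V W fun i => (e i).erase w)
    {V : Finset ι} {s : Multiset ι} (hs : ∀ w ∈ s, w ∉ V) (e : α → Multiset ι) (f : R)
    (hf : monomialProd x s * f ∈ monomialIdeal x V W e) :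
    f ∈ monomialIdeal x V W fun i => e i - s := by
  induction s using Multiset.induction generalizing e with
  | empty => simpa [monomialProd_zero] using hf
  | cons w s ih =>
    rw [monomialProd_cons, mul_assoc] at hf
    simp only [Multiset.sub_cons]
    exact ih (fun v hv => hs v (Multiset.mem_cons_of_mem hv)) _
      (hvar V e w (hs w (Multiset.mem_cons_self w s)) _ hf)

lemma exists_monomialProd_mul_sub_mem {x : ι → R} {W : Finset α}
    (hvar : ∀ (V : Finset ι) (e : α → Multiset ι), ∀ w ∉ V, ∀ f,
      x w * f ∈ monomialIdeal x V W e → f ∈ monomialIdeal x V W fun i => (e i).erase w)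
    (V : Finset ι) (e : α → Multiset ι) {w : ι} {s : Multiset ι} (hw : w ∉ s) {g : R}
    (hg : monomialProd x s * g ∈ monomialIdeal x (insert w V) W e) :
    ∃ h, monomialProd x s * (g - h * x w) ∈ monomialIdeal x V W e := by
  by_cases hsV : ∃ v ∈ s, v ∈ V
  · obtain ⟨v, hvs, hvV⟩ := hsV
    exact ⟨0, Ideal.mul_mem_right _ _
      (Ideal.mem_of_dvd _ (dvd_monomialProd_of_mem x hvs) (var_mem_monomialIdeal x hvV W e))⟩
  · push Not at hsV
    have hs : ∀ v ∈ s, v ∉ insert w V := fun v hv hmem =>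
      (mem_insert.1 hmem).elim (fun hvw => hw (hvw ▸ hv)) (hsV v hv)
    have hmem := mem_monomialIdeal_of_monomialProd_mul_mem hvar hs e g hg
    rw [monomialIdeal_insert_var, Ideal.mem_span_singleton_sup] at hmem
    obtain ⟨h, g', hg', rfl⟩ := hmem
    exact ⟨h, by simpa using monomialProd_mul_mem_monomialIdeal x V W e s hg'⟩

-- The variables in `V` are carried along because the case `w ∤ m` of the induction step, with `m`
-- the new generator, needs the statement for the old generators together with `x w`.
theorem IsRegularFamily.mem_of_var_mul_mem {x : ι → R} (hx : IsRegularFamily x) (W : Finset α)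
    (V : Finset ι) (e : α → Multiset ι) (w : ι) (hw : w ∉ V) (f : R)
    (hf : x w * f ∈ monomialIdeal x V W e) :
    f ∈ monomialIdeal x V W fun i => (e i).erase w := by
  classical
  induction W using Finset.induction_on generalizing V e w f with
  | empty =>
    simp only [monomialIdeal, coe_empty, Set.image_empty, Set.union_empty] at hf ⊢
    exact hx V w hw f hf
  | insert a W _ ih =>
    rw [monomialIdeal_insert, Ideal.mem_span_singleton_sup] at hf
    obtain ⟨g, y, hy, hgy⟩ := hf
    rw [monomialIdeal_insert, Ideal.mem_span_singleton_sup]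
    by_cases hwa : w ∈ e a
    · rw [← Multiset.cons_erase hwa, monomialProd_cons] at hgy
      have hy' : x w * (f - g * monomialProd x ((e a).erase w)) = y := by
        linear_combination -hgy
      exact ⟨g, _, ih V e w hw _ (hy'.symm ▸ hy), by ring⟩
    · have hmg : monomialProd x (e a) * g ∈ monomialIdeal x (insert w V) W e := by
        rw [monomialIdeal_insert_var, Ideal.mem_span_singleton_sup]
        exact ⟨f, -y, neg_mem hy, by linear_combination -hgy⟩
      obtain ⟨h, hh⟩ := exists_monomialProd_mul_sub_mem ih V e hwa hmg
      have hwf : x w * (f - h * monomialProd x (e a)) ∈ monomialIdeal x V W e := by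
        convert add_mem hy hh using 1
        linear_combination -hgy
      rw [Multiset.erase_of_notMem hwa]
      exact ⟨h, _, ih V e w hw _ hwf, by ring⟩

theorem IsRegularFamily.mem_span_of_monomialProd_mul_mem {x : ι → R} (hx : IsRegularFamily x)
    (W : Finset α) (e : α → Multiset ι) (s : Multiset ι) (f : R)
    (hf : monomialProd x s * f ∈ Ideal.span ((fun i => monomialProd x (e i)) '' W)) :
    f ∈ Ideal.span ((fun i => monomialProd x (e i - s)) '' W) := by
  have h := mem_monomialIdeal_of_monomialProd_mul_mem (hx.mem_of_var_mul_mem W) (V := ∅) (s := s)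
    (fun w _ => notMem_empty w) e f
  simp only [monomialIdeal, coe_empty, Set.image_empty, Set.empty_union] at h
  exact h hf

lemma IsRegularFamily.monomialProd_union_dvd {x : ι → R} (hx : IsRegularFamily x)
    {s t : Multiset ι} {r : R} (hs : monomialProd x s ∣ r) (ht : monomialProd x t ∣ r) :
    monomialProd x (s ∪ t) ∣ r := by
  obtain ⟨f, rfl⟩ := hs
  have hf := hx.mem_span_of_monomialProd_mul_mem ({()} : Finset Unit) (fun _ => t) s f
    (by simpa [Ideal.mem_span_singleton] using ht)
  rw [Multiset.union_comm, Multiset.union_def, add_comm, monomialProd_add]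
  exact mul_dvd_mul_left _ (by simpa [Ideal.mem_span_singleton] using hf)

lemma IsRegularFamily.monomialProd_sup_dvd {x : ι → R} (hx : IsRegularFamily x) (σ : Finset α)
    (e : α → Multiset ι) {r : R} (h : ∀ i ∈ σ, monomialProd x (e i) ∣ r) :
    monomialProd x (σ.sup e) ∣ r :=
  Finset.sup_induction (p := (monomialProd x · ∣ r)) (by simp [monomialProd_zero])
    (fun _ hs _ ht => hx.monomialProd_union_dvd hs ht) h

lemma IsRegularFamily.associated_monomialProd_sup [IsDomain R] {x : ι → R}
    (hx : IsRegularFamily x) {q : α → R} {e : α → Multiset ι}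
    (he : ∀ i, Associated (q i) (monomialProd x (e i))) {σ : Finset α} {l : R}
    (hdvd : ∀ i ∈ σ, q i ∣ l) (hlcm : ∀ t, (∀ i ∈ σ, q i ∣ t) → l ∣ t) :
    Associated l (monomialProd x (σ.sup e)) :=
  associated_of_dvd_dvd
    (hlcm _ fun i hi => (he i).dvd.trans (monomialProd_dvd_of_le x (le_sup hi)))
    (hx.monomialProd_sup_dvd σ e fun i hi => (he i).symm.dvd.trans (hdvd i hi))

end Monomials

section TaylorDiff
variable {R α : Type*} [CommRing R] [LinearOrder α]

/-- The Taylor differential on the subsets of `W`, all degrees at once. A chain `∑ f σ · σ` is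
encoded by its coefficient function `f`, and `w τ i` stands for the quotient `Q_{τ ∪ {i}} / Q_τ`
(it matters only for `i ∉ τ`). -/
def taylorDiff (w : Finset α → α → R) (W : Finset α) : (Finset α → R) →ₗ[R] (Finset α → R) where
  toFun f τ := ∑ i ∈ W \ τ, (-1) ^ #{j ∈ τ | j < i} * w τ i * f (insert i τ)
  map_add' f g := by
    ext τ
    simp only [Pi.add_apply, mul_add, sum_add_distrib]
  map_smul' r f := by
    ext τ
    simp only [Pi.smul_apply, smul_eq_mul, RingHom.id_apply, mul_sum, mul_left_comm]

lemma taylorDiff_apply (w : Finset α → α → R) (W : Finset α) (f : Finset α → R) (τ : Finset α) :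
    taylorDiff w W f τ = ∑ i ∈ W \ τ, (-1) ^ #{j ∈ τ | j < i} * w τ i * f (insert i τ) :=
  rfl

lemma taylorDiff_apply_congr (w : Finset α → α → R) {W τ : Finset α} {f g : Finset α → R}
    (h : ∀ i ∈ W \ τ, f (insert i τ) = g (insert i τ)) :
    taylorDiff w W f τ = taylorDiff w W g τ :=
  sum_congr rfl fun i hi => by rw [h i hi]

lemma taylorDiff_apply_empty (w : Finset α → α → R) (W : Finset α) (f : Finset α → R) :
    taylorDiff w W f ∅ = ∑ i ∈ W, w ∅ i * f {i} := by
  simp [taylorDiff_apply]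

lemma taylorDiff_apply_empty_mem_span (w : Finset α → α → R) (W : Finset α) (f : Finset α → R) :
    taylorDiff w W f ∅ ∈ Ideal.span (w ∅ '' W) := by
  rw [taylorDiff_apply_empty]
  exact sum_mem fun i hi => Ideal.mul_mem_right _ _ (Ideal.subset_span ⟨i, hi, rfl⟩)

lemma taylorDiff_single (w : Finset α → α → R) {W σ : Finset α} (hσ : σ ⊆ W) (r : R) :
    taylorDiff w W (Pi.single σ r) =
      ∑ i ∈ σ, Pi.single (σ.erase i) ((-1) ^ #{j ∈ σ | j < i} * w (σ.erase i) i * r) := by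
  ext τ
  simp only [taylorDiff_apply, Finset.sum_apply, Pi.single_apply, mul_ite, mul_zero,
    ← sum_filter]
  have hset : {i ∈ W \ τ | insert i τ = σ} = {i ∈ σ | τ = σ.erase i} := by
    ext i
    simp only [mem_filter, mem_sdiff]
    constructor
    · rintro ⟨⟨-, hiτ⟩, rfl⟩
      exact ⟨mem_insert_self i τ, (erase_insert hiτ).symm⟩
    · rintro ⟨hiσ, rfl⟩
      exact ⟨⟨hσ hiσ, notMem_erase i σ⟩, insert_erase hiσ⟩
  rw [hset]
  refine sum_congr rfl fun i hi => ?_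
  obtain ⟨-, rfl⟩ := mem_filter.1 hi
  rw [filter_erase, erase_eq_of_notMem (by simp)]

lemma neg_one_pow_card_filter_lt_mul_swap {τ : Finset α} {i j : α} (hi : i ∉ τ) (hj : j ∉ τ)
    (hij : i ≠ j) :
    (-1 : R) ^ #{l ∈ τ | l < i} * (-1) ^ #{l ∈ insert i τ | l < j} =
      -((-1) ^ #{l ∈ τ | l < j} * (-1) ^ #{l ∈ insert j τ | l < i}) := by
  wlog hlt : i < j generalizing i j
  · rw [this hj hi hij.symm (lt_of_le_of_ne (not_lt.1 hlt) hij.symm), neg_neg]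
  rw [filter_insert, if_pos hlt, filter_insert, if_neg hlt.not_gt,
    card_insert_of_notMem (by simp [hi])]
  ring

theorem taylorDiff_taylorDiff {w : Finset α → α → R}
    (hcomm : ∀ τ i j, w τ i * w (insert i τ) j = w τ j * w (insert j τ) i)
    (W : Finset α) (f : Finset α → R) : taylorDiff w W (taylorDiff w W f) = 0 := by
  ext τ
  simp only [taylorDiff_apply, mul_sum, sum_sigma', Pi.zero_apply]
  refine sum_involution (fun p _ => ⟨p.2, p.1⟩) ?_ ?_ ?_ ?_
  · rintro ⟨i, j⟩ hp
    simp only [mem_sigma, mem_sdiff, mem_insert, not_or] at hp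
    obtain ⟨⟨-, hi⟩, -, hji, hj⟩ := hp
    have hsign := neg_one_pow_card_filter_lt_mul_swap (R := R) hi hj (Ne.symm hji)
    have hw := hcomm τ i j
    rw [Finset.insert_comm j i τ]
    linear_combination w τ i * w (insert i τ) j * f (insert i (insert j τ)) * hsign -
      (-1) ^ #{l ∈ τ | l < j} * (-1) ^ #{l ∈ insert j τ | l < i} *
        f (insert i (insert j τ)) * hw
  · rintro ⟨i, j⟩ hp - heq
    simp only [mem_sigma, mem_sdiff, mem_insert, not_or] at hp
    exact hp.2.2.1 (congrArg Sigma.fst heq)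
  · rintro ⟨i, j⟩ hp
    simp only [mem_sigma, mem_sdiff, mem_insert, not_or] at hp ⊢
    tauto
  · rintro ⟨i, j⟩ -
    rfl

/-- The comparison map of the mapping cone: `taylorDiff w (insert a W)`, for `a` larger than all
elements of `W`, is the mapping cone of `taylorConn w a` from the complex with weights
`w (insert a ·)` to the complex with weights `w`, both on the subsets of `W`. -/
def taylorConn (w : Finset α → α → R) (a : α) (g : Finset α → R) (τ : Finset α) : R :=
  (-1) ^ #τ * w τ a * g τ

lemma taylorDiff_insert_apply_insert (w : Finset α → α → R) {W : Finset α} {a : α}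
    (ha : ∀ i ∈ W, i < a) (f : Finset α → R) (τ : Finset α) :
    taylorDiff w (insert a W) f (insert a τ) =
      taylorDiff (fun σ => w (insert a σ)) W (fun σ => f (insert a σ)) τ := by
  have haW : a ∉ W := fun h => (ha a h).false
  rw [taylorDiff_apply, taylorDiff_apply, insert_sdiff_insert, sdiff_insert_of_notMem haW]
  refine sum_congr rfl fun i hi => ?_
  rw [filter_insert, if_neg (ha i (mem_sdiff.1 hi).1).not_gt, Finset.insert_comm]

lemma taylorDiff_insert_apply (w : Finset α → α → R) {W : Finset α} {a : α}
    (ha : ∀ i ∈ W, i < a) (f : Finset α → R) {τ : Finset α} (hτ : τ ⊆ W) :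
    taylorDiff w (insert a W) f τ =
      taylorDiff w W f τ + taylorConn w a (fun σ => f (insert a σ)) τ := by
  have haW : a ∉ W := fun h => (ha a h).false
  rw [taylorDiff_apply, insert_sdiff_of_notMem _ fun h => haW (hτ h), sum_insert (by simp [haW]),
    filter_true_of_mem fun j hj => ha j (hτ hj), add_comm]
  rfl

lemma taylorDiff_taylorConn {w : Finset α → α → R}
    (hcomm : ∀ τ i j, w τ i * w (insert i τ) j = w τ j * w (insert j τ) i)
    (W : Finset α) (a : α) (g : Finset α → R) :
    taylorDiff w W (taylorConn w a g) =
      -taylorConn w a (taylorDiff (fun σ => w (insert a σ)) W g) := by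
  ext τ
  simp only [Pi.neg_apply, taylorConn, taylorDiff_apply, mul_sum, ← sum_neg_distrib]
  refine sum_congr rfl fun i hi => ?_
  rw [card_insert_of_notMem (mem_sdiff.1 hi).2]
  linear_combination (-(-1) ^ #{j ∈ τ | j < i} * (-1) ^ #τ * g (insert i τ)) * hcomm τ i a

/-- The properties of the quotients `w τ i = Q_{τ ∪ {i}} / Q_τ` that make the Taylor complex exact:
the square `τ ⊂ τ ∪ {i, j}` commutes, and `(w τ i : i ∈ W) : w τ a` is contained in the ideal
`(w (τ ∪ {a}) i : i ∈ W)`. -/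
structure IsTaylorWeight (w : Finset α → α → R) : Prop where
  comm : ∀ τ i j, w τ i * w (insert i τ) j = w τ j * w (insert j τ) i
  colon : ∀ τ a (W : Finset α) f,
    w τ a * f ∈ Ideal.span (w τ '' W) → f ∈ Ideal.span (w (insert a τ) '' W)

namespace IsTaylorWeight
variable {w : Finset α → α → R}

lemma comp_insert (hw : IsTaylorWeight w) (a : α) : IsTaylorWeight fun τ => w (insert a τ) where
  comm τ i j := by
    simpa only [Finset.insert_comm a] using hw.comm (insert a τ) i j
  colon τ b W f hf := by
    simpa only [Finset.insert_comm a] using hw.colon (insert a τ) b W f hf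

lemma apply_singleton_mem_span (hw : IsTaylorWeight w) {W : Finset α} {a : α}
    (ha : ∀ i ∈ W, i < a) {f : Finset α → R} (hf : taylorDiff w (insert a W) f ∅ = 0) :
    f {a} ∈ Ideal.span (w {a} '' W) := by
  refine hw.colon ∅ a W _ ?_
  rw [taylorDiff_insert_apply w ha f (empty_subset W)] at hf
  have hfa : w ∅ a * f {a} = -taylorDiff w W f ∅ := by
    simp only [taylorConn, card_empty, pow_zero, one_mul, insert_empty_eq] at hf
    linear_combination hf
  rw [hfa]
  exact neg_mem (taylorDiff_apply_empty_mem_span w W f)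

end IsTaylorWeight

lemma eq_taylorDiff_insert (w : Finset α → α → R) {W : Finset α} {a : α} (ha : ∀ i ∈ W, i < a)
    {f g₀ g₁ : Finset α → R}
    (h₁ : ∀ τ ⊆ W, f (insert a τ) = taylorDiff (fun σ => w (insert a σ)) W g₁ τ)
    (h₀ : ∀ τ ⊆ W, f τ = taylorDiff w W g₀ τ + taylorConn w a g₁ τ) :
    ∀ τ ⊆ insert a W,
      f τ = taylorDiff w (insert a W) (fun σ => if a ∈ σ then g₁ (σ.erase a) else g₀ σ) τ := by
  have ha_notMem : ∀ σ ⊆ W, a ∉ σ := fun σ hσ h => (ha a (hσ h)).false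
  have ha_insert : ∀ σ ⊆ W, ∀ i ∈ W \ σ, a ∉ insert i σ := fun σ hσ i hi =>
    ha_notMem _ (insert_subset (mem_sdiff.1 hi).1 hσ)
  intro τ hτ
  by_cases haτ : a ∈ τ
  · obtain ⟨σ, hσ, rfl⟩ : ∃ σ ⊆ W, τ = insert a σ :=
      ⟨τ.erase a, subset_insert_iff.1 hτ, (insert_erase haτ).symm⟩
    rw [taylorDiff_insert_apply_insert w ha, h₁ σ hσ]
    exact taylorDiff_apply_congr _ fun i hi => by simp [erase_insert (ha_insert σ hσ i hi)]
  · have hτW : τ ⊆ W := (subset_insert_iff_of_notMem haτ).1 hτ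
    rw [taylorDiff_insert_apply w ha _ hτW, h₀ τ hτW]
    congr 1
    · exact taylorDiff_apply_congr _ fun i hi => by simp [ha_insert τ hτW i hi]
    · simp [taylorConn, erase_insert haτ]

theorem IsTaylorWeight.exists_eq_taylorDiff (W : Finset α) {w : Finset α → α → R}
    (hw : IsTaylorWeight w) (f : Finset α → R) (hf₀ : f ∅ ∈ Ideal.span (w ∅ '' W))
    (hf : ∀ τ ⊆ W, taylorDiff w W f τ = 0) : ∃ g, ∀ τ ⊆ W, f τ = taylorDiff w W g τ := by
  induction W using Finset.induction_on_max generalizing w f with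
  | empty =>
    refine ⟨0, fun τ hτ => ?_⟩
    rw [subset_empty.1 hτ]
    simpa using hf₀
  | insert a W ha ih =>
    obtain ⟨g, hg⟩ := ih (hw.comp_insert a) (fun σ => f (insert a σ))
      (hw.apply_singleton_mem_span ha (hf ∅ (empty_subset _))) fun τ hτ => by
        rw [← taylorDiff_insert_apply_insert w ha, hf _ (insert_subset_insert a hτ)]
    rw [coe_insert, Set.image_insert_eq, Ideal.mem_span_insert] at hf₀
    obtain ⟨r, y, hy, hry⟩ := hf₀
    -- The differential ignores the value at `∅`, which is used to absorb the part of `f ∅` along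
    -- `w ∅ a`.
    set g₁ := Function.update g ∅ r with hg₁_def
    have hg₁ : ∀ τ ⊆ W, f (insert a τ) = taylorDiff (fun σ => w (insert a σ)) W g₁ τ := by
      intro τ hτ
      rw [hg τ hτ]
      exact taylorDiff_apply_congr _ fun i _ => by simp [hg₁_def]
    obtain ⟨g₀, hg₀⟩ := ih hw (f - taylorConn w a g₁)
      (by simpa [taylorConn, hg₁_def, hry, mul_comm r] using hy) fun τ hτ => by
        have hfτ := hf τ (hτ.trans (subset_insert a W))
        rw [taylorDiff_insert_apply w ha f hτ] at hfτ
        rw [map_sub, taylorDiff_taylorConn hw.comm, sub_neg_eq_add, Pi.add_apply, ← hfτ]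
        simp only [taylorConn, hg₁ τ hτ]
    exact ⟨_, eq_taylorDiff_insert w ha hg₁ fun τ hτ => sub_eq_iff_eq_add.1 (hg₀ τ hτ)⟩

section MonomialWeights
variable {ι : Type*} [DecidableEq ι] [IsDomain R] {x : ι → R} {e : α → Multiset ι}
  {L : Finset α → R} {w : Finset α → α → R}

lemma IsRegularFamily.associated_monomialProd_sub (hx : IsRegularFamily x)
    (hL : ∀ σ, Associated (L σ) (monomialProd x (σ.sup e)))
    (hw : ∀ τ i, L (insert i τ) = L τ * w τ i) (τ : Finset α) (i : α) :
    Associated (w τ i) (monomialProd x (e i - τ.sup e)) := by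
  have hLi := hL (insert i τ)
  rw [hw, sup_insert, Multiset.sup_eq_union, Multiset.union_def, add_comm,
    monomialProd_add] at hLi
  exact hLi.of_mul_left (hL τ) ((hL τ).ne_zero_iff.2 (hx.monomialProd_ne_zero _))

theorem IsRegularFamily.isTaylorWeight (hx : IsRegularFamily x)
    (hL : ∀ σ, Associated (L σ) (monomialProd x (σ.sup e)))
    (hw : ∀ τ i, L (insert i τ) = L τ * w τ i) : IsTaylorWeight w where
  comm τ i j := by
    have hL₀ := (hL τ).ne_zero_iff.2 (hx.monomialProd_ne_zero _)
    apply mul_left_cancel₀ hL₀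
    rw [← mul_assoc, ← hw, ← hw, ← mul_assoc, ← hw, ← hw, Finset.insert_comm]
  colon τ a W f hf := by
    have hwe := hx.associated_monomialProd_sub hL hw
    have hsub : ∀ i, e i - (insert a τ).sup e = e i - τ.sup e - (e a - τ.sup e) := fun i => by
      rw [sup_insert, Multiset.sup_eq_union, Multiset.union_def, tsub_tsub, add_comm]
    rw [span_image_eq_of_associated fun i _ => hwe τ i] at hf
    rw [span_image_eq_of_associated fun i _ => hwe (insert a τ) i]
    simp only [hsub]
    exact hx.mem_span_of_monomialProd_mul_mem W (fun i => e i - τ.sup e) (e a - τ.sup e) f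
      (Ideal.mem_of_dvd _ (mul_dvd_mul_right (hwe τ a).dvd f) hf)

end MonomialWeights

end TaylorDiff

section TaylorMod
variable {k : Type} [Field k] {n m : ℕ}

/-- The coefficient function of a chain of degree `p`, extended by zero to the other degrees. -/
noncomputable def TaylorMod.toFun (p : ℕ) :
    TaylorMod k n m p →ₗ[MvPolynomial (Fin n) k] (Finset (Fin m) → MvPolynomial (Fin n) k) :=
  Finsupp.lcoeFun ∘ₗ Finsupp.lmapDomain _ _ Subtype.val

/-- The chain of degree `p` with the given coefficients on `p`-element subsets. -/
noncomputable def TaylorMod.ofFun (p : ℕ) (g : Finset (Fin m) → MvPolynomial (Fin n) k) :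
    TaylorMod k n m p :=
  Finsupp.equivFunOnFinite.symm fun σ => g σ.1

lemma TaylorMod.toFun_apply {p : ℕ} (f : TaylorMod k n m p) {σ : Finset (Fin m)} (hσ : #σ = p) :
    TaylorMod.toFun p f σ = f ⟨σ, hσ⟩ :=
  Finsupp.mapDomain_apply Subtype.val_injective f ⟨σ, hσ⟩

lemma TaylorMod.toFun_apply_of_card_ne {p : ℕ} (f : TaylorMod k n m p) {σ : Finset (Fin m)}
    (hσ : #σ ≠ p) : TaylorMod.toFun p f σ = 0 :=
  Finsupp.mapDomain_of_notMem_range f σ (by simpa using hσ)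

lemma TaylorMod.toFun_single {p : ℕ} (σ : {σ : Finset (Fin m) // #σ = p})
    (r : MvPolynomial (Fin n) k) :
    TaylorMod.toFun p (Finsupp.single σ r) = Pi.single σ.1 r := by
  simp [TaylorMod.toFun, Finsupp.mapDomain_single, Finsupp.single_eq_pi_single]

lemma TaylorMod.toFun_injective (p : ℕ) :
    Function.Injective (TaylorMod.toFun p : TaylorMod k n m p →ₗ[MvPolynomial (Fin n) k] _) :=
  DFunLike.coe_injective.comp (Finsupp.mapDomain_injective Subtype.val_injective)

lemma TaylorMod.toFun_ofFun_apply {p : ℕ} (g : Finset (Fin m) → MvPolynomial (Fin n) k)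
    {σ : Finset (Fin m)} (hσ : #σ = p) : TaylorMod.toFun p (TaylorMod.ofFun p g) σ = g σ :=
  TaylorMod.toFun_apply _ hσ

variable {c : Finset (Fin m) → Fin m → MvPolynomial (Fin n) k}
  {w : Finset (Fin m) → Fin m → MvPolynomial (Fin n) k}

lemma toFun_taylorD (hcw : ∀ τ, ∀ i ∉ τ, c (insert i τ) i = w τ i) (p : ℕ)
    (f : TaylorMod k n m p) :
    TaylorMod.toFun (p - 1) (taylorD k n m c p f) = taylorDiff w univ (TaylorMod.toFun p f) := by
  suffices h : TaylorMod.toFun (p - 1) ∘ₗ taylorD k n m c p =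
      taylorDiff w univ ∘ₗ TaylorMod.toFun p from LinearMap.congr_fun h f
  refine Finsupp.lhom_ext fun σ r => ?_
  simp only [LinearMap.comp_apply, taylorD, Finsupp.lsum_single, LinearMap.toSpanSingleton_apply,
    map_smul, map_sum, TaylorMod.toFun_single, taylorDiff_single w (subset_univ _), smul_sum,
    ← Pi.single_smul, smul_eq_mul]
  refine (sum_congr rfl fun i _ => ?_).trans (sum_attach σ.1 _)
  rw [← hcw _ i.1 (notMem_erase i.1 _), insert_erase i.2, mul_comm r]

lemma toFun_taylorD_ofFun_apply (hcw : ∀ τ, ∀ i ∉ τ, c (insert i τ) i = w τ i) {p : ℕ}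
    (g : Finset (Fin m) → MvPolynomial (Fin n) k) {τ : Finset (Fin m)} (hτ : #τ = p) :
    TaylorMod.toFun p (taylorD k n m c (p + 1) (TaylorMod.ofFun (p + 1) g)) τ =
      taylorDiff w univ g τ := by
  refine (congrFun (toFun_taylorD hcw (p + 1) _) τ).trans (taylorDiff_apply_congr w fun i hi => ?_)
  exact TaylorMod.toFun_ofFun_apply g (by rw [card_insert_of_notMem (mem_sdiff.1 hi).2, hτ])

theorem ker_taylorD_eq_range (hw : IsTaylorWeight w)
    (hcw : ∀ τ, ∀ i ∉ τ, c (insert i τ) i = w τ i) {p : ℕ} (hp : 1 ≤ p) :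
    LinearMap.ker (taylorD k n m c p) = LinearMap.range (taylorD k n m c (p + 1)) := by
  apply le_antisymm
  · intro f hf
    have hcycle : taylorDiff w univ (TaylorMod.toFun p f) = 0 := by
      rw [← toFun_taylorD hcw, LinearMap.mem_ker.1 hf, map_zero]
    have hf_empty : TaylorMod.toFun p f ∅ = 0 :=
      TaylorMod.toFun_apply_of_card_ne f (by rw [card_empty]; omega)
    obtain ⟨g, hg⟩ := hw.exists_eq_taylorDiff univ (TaylorMod.toFun p f)
      (hf_empty ▸ zero_mem _) fun τ _ => congrFun hcycle τ
    refine ⟨TaylorMod.ofFun (p + 1) g, TaylorMod.toFun_injective p (funext fun τ => ?_)⟩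
    by_cases hτ : #τ = p
    · rw [hg τ (subset_univ τ)]
      exact toFun_taylorD_ofFun_apply hcw g hτ
    · rw [TaylorMod.toFun_apply_of_card_ne f hτ]
      exact TaylorMod.toFun_apply_of_card_ne (taylorD k n m c (p + 1) _) hτ
  · rintro _ ⟨g, rfl⟩
    refine TaylorMod.toFun_injective (p - 1) ?_
    rw [map_zero, toFun_taylorD hcw]
    exact (congrArg _ (toFun_taylorD hcw (p + 1) g)).trans (taylorDiff_taylorDiff hw.comm univ _)

lemma taylorAug_apply (f : TaylorMod k n m 0) : taylorAug k n m f = TaylorMod.toFun 0 f ∅ := by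
  suffices h : taylorAug k n m = LinearMap.proj ∅ ∘ₗ TaylorMod.toFun 0 from LinearMap.congr_fun h f
  refine Finsupp.lhom_ext fun σ r => ?_
  simp [taylorAug, TaylorMod.toFun_single, card_eq_zero.1 σ.2]

theorem map_taylorAug_range_taylorD (hcw : ∀ τ, ∀ i ∉ τ, c (insert i τ) i = w τ i) :
    Submodule.map (taylorAug k n m) (LinearMap.range (taylorD k n m c 1)) =
      Ideal.span (Set.range (w ∅)) := by
  apply le_antisymm
  · rintro _ ⟨_, ⟨f, rfl⟩, rfl⟩
    rw [taylorAug_apply]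
    have h := taylorDiff_apply_empty_mem_span w univ (TaylorMod.toFun 1 f)
    rw [coe_univ, Set.image_univ] at h
    exact (congrFun (toFun_taylorD hcw 1 f) ∅).symm ▸ h
  · intro r hr
    obtain ⟨b, rfl⟩ := Ideal.mem_span_range_iff_exists_fun.1 hr
    refine ⟨_, ⟨TaylorMod.ofFun 1 fun σ => ∑ i ∈ σ, b i, rfl⟩, ?_⟩
    rw [taylorAug_apply]
    refine (toFun_taylorD_ofFun_apply hcw _ card_empty).trans ?_
    simp [taylorDiff_apply_empty, mul_comm]

end TaylorMod

theorem taylor_resolution_of_regular_factors_general (k : Type) [Field k] (n m : ℕ)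
    (Q : Fin m → MvPolynomial (Fin n) k)
    (hQ0 : ∀ i, Q i ≠ 0)
    (L : Finset (Fin m) → MvPolynomial (Fin n) k)
    (hLdvd : ∀ σ, ∀ i ∈ σ, Q i ∣ L σ)
    (hLlcm : ∀ σ t, (∀ i ∈ σ, Q i ∣ t) → L σ ∣ t)
    (c : Finset (Fin m) → Fin m → MvPolynomial (Fin n) k)
    (hc : ∀ σ, ∀ i ∈ σ, c σ i * L (σ.erase i) = L σ)
    (E : Set (MvPolynomial (Fin n) k))
    (hEfac : ∀ i, ∀ z : MvPolynomial (Fin n) k, Irreducible z → z ∣ Q i →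
      ∃ w ∈ E, Associated z w)
    (hreg : ∀ l : List (MvPolynomial (Fin n) k), (∀ z ∈ l, z ∈ E) → l.Nodup →
      RingTheory.Sequence.IsWeaklyRegular (MvPolynomial (Fin n) k) l) :
    IsTaylorResolution k n m Q c := by
  classical
  have hE : IsRegularFamily ((↑) : E → MvPolynomial (Fin n) k) := isRegularFamily_coe hreg
  choose e he using fun i => exists_associated_monomialProd E (hQ0 i) (hEfac i)
  have hL : ∀ σ, Associated (L σ) (monomialProd (↑) (σ.sup e)) := fun σ =>
    hE.associated_monomialProd_sup he (hLdvd σ) (hLlcm σ)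
  choose w hw using fun τ i =>
    hLlcm τ (L (insert i τ)) fun j hj => hLdvd _ j (mem_insert_of_mem hj)
  have hcw : ∀ τ, ∀ i ∉ τ, c (insert i τ) i = w τ i := fun τ i hi => by
    have hL₀ : L τ ≠ 0 := (hL τ).ne_zero_iff.2 (hE.monomialProd_ne_zero _)
    have hci := hc (insert i τ) i (mem_insert_self i τ)
    rw [erase_insert hi, hw, mul_comm] at hci
    exact mul_left_cancel₀ hL₀ hci
  refine ⟨fun p hp => ker_taylorD_eq_range (hE.isTaylorWeight hL hw) hcw hp, ?_⟩
  rw [map_taylorAug_range_taylorD hcw, ← Set.image_univ, ← Set.image_univ]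
  refine span_image_eq_of_associated fun i _ => ?_
  simpa using (hE.associated_monomialProd_sub hL hw ∅ i).trans (by simpa using (he i).symm)

/-- Let `E` be a set of pairwise non-associated irreducible polynomials
of `S` containing all irreducible factors of every element of `𝒜`.  If every finite
sequence of distinct elements of `E` is a regular sequence on `S`, then the Taylor
complex of `𝒜` is a resolution of `S/I`. -/
theorem taylor_resolution_of_regular_factors (k : Type) [Field k] (n m : ℕ)
    (Q : Fin m → MvPolynomial (Fin n) k)
    (hQ0 : ∀ i, Q i ≠ 0)
    (hQhom : ∀ i, ∃ d, (Q i).IsHomogeneous d)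
    (hQdvd : ∀ i j, i ≠ j → ¬ Q i ∣ Q j)
    (L : Finset (Fin m) → MvPolynomial (Fin n) k)
    (hLdvd : ∀ σ, ∀ i ∈ σ, Q i ∣ L σ)
    (hLlcm : ∀ σ t, (∀ i ∈ σ, Q i ∣ t) → L σ ∣ t)
    (c : Finset (Fin m) → Fin m → MvPolynomial (Fin n) k)
    (hc : ∀ σ, ∀ i ∈ σ, c σ i * L (σ.erase i) = L σ)
    (E : Set (MvPolynomial (Fin n) k))
    (hEirr : ∀ z ∈ E, Irreducible z)
    (hEassoc : ∀ z ∈ E, ∀ w ∈ E, z ≠ w → ¬ Associated z w)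
    (hEfac : ∀ i, ∀ z : MvPolynomial (Fin n) k, Irreducible z → z ∣ Q i →
      ∃ w ∈ E, Associated z w)
    (hreg : ∀ l : List (MvPolynomial (Fin n) k), (∀ z ∈ l, z ∈ E) → l.Nodup →
      RingTheory.Sequence.IsRegular (MvPolynomial (Fin n) k) l) :
    IsTaylorResolution k n m Q c :=
  taylor_resolution_of_regular_factors_general k n m Q hQ0 L hLdvd hLlcm c hc E hEfac
    fun l hl hnodup => (hreg l hl hnodup).toIsWeaklyRegular
end

section
/- If every element of 𝒜 is a monomial (a product of powers of the variables), then the Taylor complex of 𝒜 is a resolution of S/I. -/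
open Finset

/-!
Sending the basis element `σ` to `Q_σ` times `σ` embeds the Taylor complex in the simplicial chain
complex of the full simplex on the index set with coefficients in `S`, and the image consists of
the chains whose coefficient at each `σ` is a common multiple of the `Q_i` with `i ∈ σ`. For
monomials `Q_i` this subcomplex is graded by the exponents `e`: a cycle homogeneous of exponent `e`
is a chain on the vertices `a` such that `Q_a` divides `x ^ e`. If it is nonzero and of positive
size, such a vertex exists, and coning off from it exhibits the cycle as a boundary.
-/

namespace TaylorComplex

section Simplex

variable {ι M N : Type*} [LinearOrder ι]

/-- The incidence sign `(-1) ^ ε(σ, i)` of the simplicial boundary, where `ε(σ, i)` counts the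
elements of `σ` below `i`; it is also defined for `i ∉ σ`. -/
def incidenceSign (i : ι) (σ : Finset ι) : ℤˣ := (-1) ^ #{j ∈ σ | j < i}

theorem incidenceSign_insert_of_le {i a : ι} (σ : Finset ι) (h : i ≤ a) :
    incidenceSign i (insert a σ) = incidenceSign i σ := by
  rw [incidenceSign, filter_insert, if_neg h.not_gt, incidenceSign]

theorem incidenceSign_erase_self (i : ι) (σ : Finset ι) :
    incidenceSign i (σ.erase i) = incidenceSign i σ := by
  have hbelow : {j ∈ σ.erase i | j < i} = {j ∈ σ | j < i} := by
    ext j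
    simp only [mem_filter, mem_erase]
    exact ⟨fun h => ⟨h.1.2, h.2⟩, fun h => ⟨⟨h.2.ne, h.1⟩, h.2⟩⟩
  rw [incidenceSign, hbelow, incidenceSign]

theorem incidenceSign_insert_of_lt {i a : ι} {σ : Finset ι} (ha : a ∉ σ) (h : a < i) :
    incidenceSign i (insert a σ) = -incidenceSign i σ := by
  rw [incidenceSign, filter_insert, if_pos h, card_insert_of_notMem (by simp [ha]), pow_succ,
    mul_neg_one, incidenceSign]

theorem incidenceSign_insert_mul_incidenceSign_insert {i j : ι} {σ : Finset ι} (hi : i ∉ σ)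
    (hj : j ∉ σ) (hij : i ≠ j) :
    incidenceSign i (insert j σ) * incidenceSign j (insert i σ) =
      -(incidenceSign i σ * incidenceSign j σ) := by
  rcases lt_or_gt_of_ne hij with h | h
  · rw [incidenceSign_insert_of_le σ h.le, incidenceSign_insert_of_lt hi h, mul_neg]
  · rw [incidenceSign_insert_of_le σ h.le, incidenceSign_insert_of_lt hj h, neg_mul]

theorem incidenceSign_mul_incidenceSign_insert_comm {i j : ι} {σ : Finset ι} (hi : i ∉ σ)
    (hj : j ∉ σ) (hij : i ≠ j) :
    incidenceSign i σ * incidenceSign j (insert i σ) =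
      -(incidenceSign j σ * incidenceSign i (insert j σ)) := by
  rcases lt_or_gt_of_ne hij with h | h
  · rw [incidenceSign_insert_of_le σ h.le, incidenceSign_insert_of_lt hi h, mul_neg, mul_comm]
  · rw [incidenceSign_insert_of_le σ h.le, incidenceSign_insert_of_lt hj h, mul_neg, mul_comm,
      neg_neg]

variable [AddCommGroup M] [AddCommGroup N]

/-- The cone with apex `a` over a simplicial chain, the standard contracting homotopy of the
simplex; simplices already containing `a` are sent to zero. -/
def cone (a : ι) (f : Finset ι → M) (σ : Finset ι) : M :=
  if a ∈ σ then incidenceSign a σ • f (σ.erase a) else 0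

theorem cone_insert {a : ι} {σ : Finset ι} (ha : a ∉ σ) (f : Finset ι → M) :
    cone a f (insert a σ) = incidenceSign a σ • f σ := by
  rw [cone, if_pos (mem_insert_self a σ), incidenceSign_insert_of_le σ le_rfl, erase_insert ha]

theorem cone_of_notMem {a : ι} {σ : Finset ι} (ha : a ∉ σ) (f : Finset ι → M) :
    cone a f σ = 0 :=
  if_neg ha

variable [Fintype ι]

/-- The boundary of simplicial chains, in all degrees at once, on the full simplex with vertex
set `ι` and coefficients in `M`; the empty face is included. A chain is encoded by its coefficient
function, so the boundary at `τ` collects the coefficients of the faces covering `τ`. -/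
def simplexBoundary : (Finset ι → M) →+ (Finset ι → M) where
  toFun f τ := ∑ i ∈ τᶜ, incidenceSign i τ • f (insert i τ)
  map_zero' := by ext; simp
  map_add' f g := by ext; simp [sum_add_distrib]

theorem simplexBoundary_apply (f : Finset ι → M) (τ : Finset ι) :
    simplexBoundary f τ = ∑ i ∈ τᶜ, incidenceSign i τ • f (insert i τ) := rfl

theorem simplexBoundary_comp (φ : M →+ N) (f : Finset ι → M) :
    simplexBoundary (φ ∘ f) = φ ∘ simplexBoundary f := by
  ext τ
  simp [simplexBoundary_apply, Units.smul_def]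

theorem simplexBoundary_single (σ : Finset ι) (x : M) :
    simplexBoundary (Pi.single σ x) =
      ∑ i ∈ σ, Pi.single (σ.erase i) (incidenceSign i σ • x) := by
  ext τ
  have hfaces : {i ∈ τᶜ | insert i τ = σ} = {i ∈ σ | τ = σ.erase i} := by
    ext i
    simp only [mem_filter, mem_compl]
    constructor
    · rintro ⟨hi, rfl⟩
      exact ⟨mem_insert_self i τ, (erase_insert hi).symm⟩
    · rintro ⟨hi, rfl⟩
      exact ⟨notMem_erase i σ, insert_erase hi⟩
  simp only [simplexBoundary_apply, Finset.sum_apply, Pi.single_apply, smul_ite, smul_zero,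
    ← sum_filter, hfaces]
  refine sum_congr rfl fun i hi => ?_
  rw [(mem_filter.1 hi).2, incidenceSign_erase_self]

theorem simplexBoundary_simplexBoundary (f : Finset ι → M) :
    simplexBoundary (simplexBoundary f) = 0 := by
  ext τ
  simp only [simplexBoundary_apply, smul_sum, smul_smul, sum_sigma', Pi.zero_apply]
  refine sum_involution (fun x _ => ⟨x.2, x.1⟩) ?_ ?_ ?_ ?_
  · rintro ⟨i, j⟩ hx
    simp only [mem_sigma, mem_compl, mem_insert, not_or] at hx
    rw [incidenceSign_mul_incidenceSign_insert_comm hx.1 hx.2.2 (Ne.symm hx.2.1),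
      insert_comm, Units.neg_smul, neg_add_cancel]
  · rintro ⟨i, j⟩ hx - heq
    simp_all
  · rintro ⟨i, j⟩ hx
    simp_all [eq_comm]
  · simp

theorem simplexBoundary_cone_add_cone_simplexBoundary (a : ι) (f : Finset ι → M) :
    simplexBoundary (cone a f) + cone a (simplexBoundary f) = f := by
  ext τ
  rw [Pi.add_apply]
  by_cases ha : a ∈ τ
  · obtain ⟨ρ, haρ, rfl⟩ : ∃ ρ, a ∉ ρ ∧ insert a ρ = τ := ⟨τ.erase a, by simp, insert_erase ha⟩
    have hcompl : ρᶜ = insert a (insert a ρ)ᶜ := by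
      rw [compl_insert, insert_erase (mem_compl.2 haρ)]
    rw [cone_insert haρ, simplexBoundary_apply f, hcompl, sum_insert (by simp), smul_add,
      smul_smul, Int.units_mul_self, one_smul, add_left_comm, smul_sum, simplexBoundary_apply,
      ← sum_add_distrib, sum_eq_zero, add_zero]
    intro i hi
    simp only [mem_compl, mem_insert, not_or] at hi
    have hai : a ∉ insert i ρ := by simp [haρ, Ne.symm hi.1]
    rw [insert_comm, cone_insert hai, smul_smul, smul_smul,
      incidenceSign_insert_mul_incidenceSign_insert hi.2 haρ hi.1,
      mul_comm (incidenceSign a ρ), Units.neg_smul, neg_add_cancel]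
  · rw [cone_of_notMem ha, add_zero, simplexBoundary_apply,
      sum_eq_single_of_mem a (mem_compl.2 ha), cone_insert ha, smul_smul, Int.units_mul_self,
      one_smul]
    intro i _ hia
    rw [cone_of_notMem (by simp [ha, hia.symm]), smul_zero]

theorem simplexBoundary_cone_of_simplexBoundary_eq_zero {f : Finset ι → M}
    (hf : simplexBoundary f = 0) (a : ι) : simplexBoundary (cone a f) = f := by
  have hcone : cone a (0 : Finset ι → M) = 0 := by ext; simp [cone]
  simpa [hf, hcone] using simplexBoundary_cone_add_cone_simplexBoundary a f

end Simplex

section CommonMultipleChains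

variable {ι R : Type*} [CommRing R]

/-- The `R`-chains supported on `p`-element simplices whose coefficient at `σ` is a common multiple
of the `Q i` with `i ∈ σ`: the image of `K̃_p` under `taylorEmbedding`. -/
def commonMultipleChains (Q : ι → R) (p : ℕ) : AddSubgroup (Finset ι → R) where
  carrier := {f | (∀ σ, #σ ≠ p → f σ = 0) ∧ ∀ σ, ∀ i ∈ σ, Q i ∣ f σ}
  zero_mem' := ⟨fun _ _ => rfl, fun _ _ _ => dvd_zero _⟩
  add_mem' hf hg := ⟨fun σ hσ => by simp [hf.1 σ hσ, hg.1 σ hσ],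
    fun σ i hi => dvd_add (hf.2 σ i hi) (hg.2 σ i hi)⟩
  neg_mem' hf := ⟨fun σ hσ => by simp [hf.1 σ hσ], fun σ i hi => (hf.2 σ i hi).neg_right⟩

theorem comp_mem_commonMultipleChains {Q : ι → R} {p : ℕ} {f : Finset ι → R} {φ : R →+ R}
    (hφ : ∀ i x, Q i ∣ x → Q i ∣ φ x) (hf : f ∈ commonMultipleChains Q p) :
    φ ∘ f ∈ commonMultipleChains Q p :=
  ⟨fun σ hσ => by simp [hf.1 σ hσ], fun σ i hi => hφ i _ (hf.2 σ i hi)⟩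

theorem cone_mem_commonMultipleChains [LinearOrder ι] {Q : ι → R} {p : ℕ} {f : Finset ι → R}
    (hf : f ∈ commonMultipleChains Q p) {a : ι} (ha : ∀ σ, Q a ∣ f σ) :
    cone a f ∈ commonMultipleChains Q (p + 1) := by
  refine ⟨fun σ hσ => ?_, fun σ i hi => ?_⟩
  · by_cases haσ : a ∈ σ
    · have hcard : #(σ.erase a) ≠ p := fun h => hσ (by rw [← h, card_erase_add_one haσ])
      simp [cone, hf.1 _ hcard]
    · exact cone_of_notMem haσ f
  · by_cases haσ : a ∈ σ
    · have hdvd : Q i ∣ f (σ.erase a) := by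
        rcases eq_or_ne i a with rfl | hia
        · exact ha _
        · exact hf.2 _ i (mem_erase.2 ⟨hia, hi⟩)
      rw [cone, if_pos haσ, Units.smul_def, zsmul_eq_mul]
      exact hdvd.mul_left _
    · simp [cone_of_notMem haσ]

end CommonMultipleChains

section MonomialComponent

open MvPolynomial

variable {α R : Type*} [CommSemiring R]

/-- The projection of a polynomial onto its component in the fine (multi)degree `e`. -/
noncomputable def monomialComponent (e : α →₀ ℕ) : MvPolynomial α R →+ MvPolynomial α R :=
  (monomial e ∘ₗ lcoeff R e).toAddMonoidHom

theorem monomialComponent_apply (e : α →₀ ℕ) (q : MvPolynomial α R) :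
    monomialComponent e q = monomial e (coeff e q) := rfl

theorem monomial_one_dvd_iff_forall_le {d : α →₀ ℕ} {q : MvPolynomial α R} :
    monomial d 1 ∣ q ↔ ∀ e, coeff e q ≠ 0 → d ≤ e := by
  simpa [Ideal.mem_span_singleton] using mem_ideal_span_monomial_image (x := q) (s := {d})

theorem monomial_one_dvd_monomialComponent {d : α →₀ ℕ} {q : MvPolynomial α R}
    (h : monomial d 1 ∣ q) (e : α →₀ ℕ) : monomial d 1 ∣ monomialComponent e q := by
  rw [monomialComponent_apply, monomial_dvd_monomial]
  exact ⟨or_iff_not_imp_left.2 (monomial_one_dvd_iff_forall_le.1 h e), one_dvd _⟩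

theorem sum_monomialComponent {T : Finset (α →₀ ℕ)} {q : MvPolynomial α R} (hT : q.support ⊆ T) :
    ∑ e ∈ T, monomialComponent e q = q := by
  conv_rhs => rw [q.as_sum]
  exact (sum_subset hT fun e _ he => by
    rw [monomialComponent_apply, notMem_support_iff.1 he, monomial_zero]).symm

end MonomialComponent

section MonomialExactness

open MvPolynomial

variable {ι α R : Type*} [LinearOrder ι] [Fintype ι] [CommRing R] {D : ι → α →₀ ℕ} {p : ℕ}
  {f : Finset ι → MvPolynomial α R}

theorem monomialComponent_comp_mem_map_simplexBoundary (hp : 1 ≤ p)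
    (hf : f ∈ commonMultipleChains (fun i => monomial (D i) 1) p) (hf0 : simplexBoundary f = 0)
    (e : α →₀ ℕ) :
    monomialComponent e ∘ f ∈
      (commonMultipleChains (fun i => monomial (D i) 1) (p + 1)).map simplexBoundary := by
  by_cases hfe : ∀ σ, coeff e (f σ) = 0
  · have hzero : monomialComponent e ∘ f = 0 := by ext1 σ; simp [monomialComponent_apply, hfe]
    exact hzero ▸ zero_mem _
  obtain ⟨σ, hσ⟩ := not_forall.1 hfe
  have hcard : #σ = p := by
    by_contra h
    simp [hf.1 σ h] at hσ
  obtain ⟨a, ha⟩ : σ.Nonempty := card_pos.1 (hcard ▸ hp)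
  have hae : D a ≤ e := monomial_one_dvd_iff_forall_le.1 (hf.2 σ a ha) e hσ
  have hcomp : monomialComponent e ∘ f ∈ commonMultipleChains (fun i => monomial (D i) 1) p :=
    comp_mem_commonMultipleChains (fun _ _ h => monomial_one_dvd_monomialComponent h e) hf
  refine ⟨cone a (monomialComponent e ∘ f), cone_mem_commonMultipleChains hcomp fun τ => ?_,
    simplexBoundary_cone_of_simplexBoundary_eq_zero ?_ a⟩
  · exact monomial_dvd_monomial.2 ⟨Or.inr hae, one_dvd _⟩
  · ext1 τ
    simp [simplexBoundary_comp, hf0]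

theorem mem_map_simplexBoundary_of_monomial (hp : 1 ≤ p)
    (hf : f ∈ commonMultipleChains (fun i => monomial (D i) 1) p) (hf0 : simplexBoundary f = 0) :
    f ∈ (commonMultipleChains (fun i => monomial (D i) 1) (p + 1)).map simplexBoundary := by
  classical
  have hsum : ∑ e ∈ univ.biUnion fun σ => (f σ).support, monomialComponent e ∘ f = f := by
    ext1 σ
    rw [Finset.sum_apply]
    exact sum_monomialComponent (subset_biUnion_of_mem (fun σ => (f σ).support) (mem_univ σ))
  rw [← hsum]
  exact sum_mem fun e _ => monomialComponent_comp_mem_map_simplexBoundary hp hf hf0 e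

end MonomialExactness

section TaylorEmbedding

variable {ι R : Type*} [CommRing R] {L : Finset ι → R} {p : ℕ}

/-- The embedding `σ ↦ L σ • σ` of the `p`-th term of the Taylor complex, with `L σ` in the role of
`Q_σ`, into the chains of the full simplex. -/
noncomputable def taylorEmbedding (L : Finset ι → R) (p : ℕ) :
    ({σ : Finset ι // #σ = p} →₀ R) →+ (Finset ι → R) where
  toFun x σ := x.mapDomain Subtype.val σ * L σ
  map_zero' := by ext; simp
  map_add' x y := by ext; simp [Finsupp.mapDomain_add, add_mul]

theorem taylorEmbedding_apply (x : {σ : Finset ι // #σ = p} →₀ R) (σ : Finset ι) :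
    taylorEmbedding L p x σ = x.mapDomain Subtype.val σ * L σ := rfl

theorem taylorEmbedding_single [DecidableEq ι] (σ : {σ : Finset ι // #σ = p}) (a : R) :
    taylorEmbedding L p (Finsupp.single σ a) = Pi.single σ.1 (a * L σ.1) := by
  ext τ
  rcases eq_or_ne τ σ.1 with rfl | h
  · simp [taylorEmbedding_apply, Finsupp.mapDomain_single]
  · simp [taylorEmbedding_apply, Finsupp.mapDomain_single, h]

theorem taylorEmbedding_injective [NoZeroDivisors R] (hL : ∀ σ, L σ ≠ 0) :
    Function.Injective (taylorEmbedding L p) := by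
  intro x y hxy
  refine Finsupp.mapDomain_injective Subtype.val_injective (Finsupp.ext fun σ => ?_)
  exact mul_right_cancel₀ (hL σ) (congrFun hxy σ)

theorem range_taylorEmbedding [Finite ι] {Q : ι → R}
    (hL : ∀ σ t, L σ ∣ t ↔ ∀ i ∈ σ, Q i ∣ t) :
    (taylorEmbedding L p).range = commonMultipleChains Q p := by
  ext f
  constructor
  · rintro ⟨x, rfl⟩
    refine ⟨fun σ hσ => ?_, fun σ => (hL σ _).1 (dvd_mul_left _ _)⟩
    rw [taylorEmbedding_apply, Finsupp.mapDomain_of_notMem_range _ _ (by simpa using hσ), zero_mul]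
  · rintro ⟨hcard, hdvd⟩
    choose g hg using fun σ => (hL σ _).2 (hdvd σ)
    refine ⟨Finsupp.equivFunOnFinite.symm fun σ => g σ.1, ?_⟩
    ext σ
    by_cases hσ : #σ = p
    · have hval := Finsupp.mapDomain_apply Subtype.val_injective
        (Finsupp.equivFunOnFinite.symm fun σ : {σ : Finset ι // #σ = p} => g σ.1) ⟨σ, hσ⟩
      rw [taylorEmbedding_apply, hval, hg, mul_comm]
      rfl
    · rw [taylorEmbedding_apply, Finsupp.mapDomain_of_notMem_range _ _ (by simpa using hσ),
        zero_mul, hcard σ hσ]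

end TaylorEmbedding

section TaylorResolution

variable {k : Type} [Field k] {n m : ℕ} {Q : Fin m → MvPolynomial (Fin n) k}
  {L : Finset (Fin m) → MvPolynomial (Fin n) k}
  {c : Finset (Fin m) → Fin m → MvPolynomial (Fin n) k} {p : ℕ}

theorem taylorD_single (σ : {σ : Finset (Fin m) // #σ = p}) (a : MvPolynomial (Fin n) k) :
    taylorD k n m c p (Finsupp.single σ a) =
      a • ∑ i ∈ σ.1.attach, Finsupp.single
        ⟨σ.1.erase i.1, by rw [card_erase_of_mem i.2, σ.2]⟩
        ((-1) ^ #{j ∈ σ.1 | j < i.1} * c σ.1 i.1) := by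
  rw [taylorD, Finsupp.lsum_single, LinearMap.toSpanSingleton_apply]

theorem taylorEmbedding_taylorD (hc : ∀ σ, ∀ i ∈ σ, c σ i * L (σ.erase i) = L σ)
    (x : TaylorMod k n m p) :
    taylorEmbedding L (p - 1) (taylorD k n m c p x) = simplexBoundary (taylorEmbedding L p x) := by
  induction x using Finsupp.induction_linear with
  | zero => simp
  | add x y hx hy => simp only [map_add, hx, hy]
  | single σ a =>
    rw [taylorEmbedding_single, simplexBoundary_single, taylorD_single, smul_sum, map_sum,
      ← sum_attach σ.1]
    refine sum_congr rfl fun i _ => ?_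
    rw [Finsupp.smul_single, taylorEmbedding_single, ← hc σ.1 i.1 i.2]
    congr 1
    simp only [incidenceSign, Units.smul_def, zsmul_eq_mul, smul_eq_mul]
    push_cast
    ring

theorem ker_taylorD_eq_range (hL0 : ∀ σ, L σ ≠ 0) (hL : ∀ σ t, L σ ∣ t ↔ ∀ i ∈ σ, Q i ∣ t)
    (hc : ∀ σ, ∀ i ∈ σ, c σ i * L (σ.erase i) = L σ)
    (hexact : ∀ f ∈ commonMultipleChains Q p, simplexBoundary f = 0 →
      f ∈ (commonMultipleChains Q (p + 1)).map simplexBoundary) :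
    LinearMap.ker (taylorD k n m c p) = LinearMap.range (taylorD k n m c (p + 1)) := by
  apply le_antisymm
  · intro x hx
    rw [LinearMap.mem_ker] at hx
    have hcycle : simplexBoundary (taylorEmbedding L p x) = 0 := by
      rw [← taylorEmbedding_taylorD hc, hx, map_zero]
    rw [← range_taylorEmbedding hL, ← range_taylorEmbedding hL] at hexact
    obtain ⟨_, ⟨w, rfl⟩, hw⟩ := hexact _ ⟨x, rfl⟩ hcycle
    exact ⟨w, taylorEmbedding_injective hL0 ((taylorEmbedding_taylorD hc w).trans hw)⟩
  · rintro _ ⟨w, rfl⟩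
    apply taylorEmbedding_injective hL0
    have hw : taylorEmbedding L p (taylorD k n m c (p + 1) w) = _ := taylorEmbedding_taylorD hc w
    exact (taylorEmbedding_taylorD hc _).trans <| by
      rw [hw, simplexBoundary_simplexBoundary, map_zero]

theorem taylorAug_comp_taylorD_one :
    taylorAug k n m ∘ₗ taylorD k n m c 1 =
      Finsupp.linearCombination _ fun σ => ∑ i ∈ σ.1, c σ.1 i := by
  refine Finsupp.lhom_ext fun σ a => ?_
  obtain ⟨σ, hσ⟩ := σ
  obtain ⟨i, rfl⟩ := card_eq_one.1 hσ
  rw [LinearMap.comp_apply, taylorD_single, Finsupp.linearCombination_single, map_smul, map_sum]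
  simp only [taylorAug, Finsupp.lsum_single, LinearMap.id_apply]
  rw [sum_attach {i} fun j => (-1) ^ #{l ∈ {i} | l < j} * c {i} j]
  simp [filter_singleton]

theorem map_taylorAug_range_taylorD_one (hL : ∀ σ t, L σ ∣ t ↔ ∀ i ∈ σ, Q i ∣ t)
    (hc : ∀ σ, ∀ i ∈ σ, c σ i * L (σ.erase i) = L σ) :
    Submodule.map (taylorAug k n m) (LinearMap.range (taylorD k n m c 1)) =
      Ideal.span (Set.range Q) := by
  have hassoc (i : Fin m) : Associated (c {i} i) (Q i) := by
    have hunit : IsUnit (L ∅) := isUnit_of_dvd_one ((hL ∅ 1).2 (by simp))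
    have hci : c {i} i * L ∅ = L {i} := by simpa using hc {i} i (mem_singleton_self i)
    have hLQ : Associated (L {i}) (Q i) :=
      associated_of_dvd_dvd ((hL _ _).2 (by simp)) ((hL _ _).1 dvd_rfl i (mem_singleton_self i))
    exact (associated_mul_unit_right _ _ hunit).trans (hci ▸ hLQ)
  have hrange : Set.range (fun σ : {σ : Finset (Fin m) // #σ = 1} => ∑ i ∈ σ.1, c σ.1 i) =
      Set.range fun i => c {i} i := by
    ext q
    simp [card_eq_one]
  rw [← LinearMap.range_comp, taylorAug_comp_taylorD_one, Finsupp.range_linearCombination, hrange,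
    Ideal.submodule_span_eq, Ideal.span_range_eq_iSup, Ideal.span_range_eq_iSup]
  exact iSup_congr fun i => Ideal.span_singleton_eq_span_singleton.2 (hassoc i)

end TaylorResolution

end TaylorComplex

open TaylorComplex in
theorem taylor_resolution_of_monomial_general (k : Type) [Field k] (n m : ℕ)
    (Q : Fin m → MvPolynomial (Fin n) k)
    (L : Finset (Fin m) → MvPolynomial (Fin n) k)
    (hLdvd : ∀ σ, ∀ i ∈ σ, Q i ∣ L σ)
    (hLlcm : ∀ σ t, (∀ i ∈ σ, Q i ∣ t) → L σ ∣ t)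
    (c : Finset (Fin m) → Fin m → MvPolynomial (Fin n) k)
    (hc : ∀ σ, ∀ i ∈ σ, c σ i * L (σ.erase i) = L σ)
    (hmono : ∀ i, ∃ d : Fin n →₀ ℕ, Q i = MvPolynomial.monomial d 1) :
    IsTaylorResolution k n m Q c := by
  choose D hD using hmono
  obtain rfl : Q = fun i => MvPolynomial.monomial (D i) 1 := funext hD
  have hL (σ t) : L σ ∣ t ↔ ∀ i ∈ σ, MvPolynomial.monomial (D i) 1 ∣ t :=
    ⟨fun h i hi => (hLdvd σ i hi).trans h, hLlcm σ t⟩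
  have hL0 (σ) : L σ ≠ 0 :=
    ne_zero_of_dvd_ne_zero (prod_ne_zero_iff.2 fun i _ => by simp)
      ((hL σ _).2 fun i hi => dvd_prod_of_mem (fun i => MvPolynomial.monomial (D i) 1) hi)
  exact ⟨fun p hp => ker_taylorD_eq_range hL0 hL hc fun f =>
    mem_map_simplexBoundary_of_monomial hp, map_taylorAug_range_taylorD_one hL hc⟩

/-- If every element of `𝒜` is a monomial, then the Taylor complex of
`𝒜` is a resolution of `S/I`.  Here `Q : Fin m → S` lists the (distinct) elements of
`𝒜`, nonzero and homogeneous, none dividing another; `L σ` is a least common multiple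
of `{Q i : i ∈ σ}` and `c σ i` is the quotient `L σ / L (σ.erase i)`. -/
theorem taylor_resolution_of_monomial (k : Type) [Field k] (n m : ℕ)
    (Q : Fin m → MvPolynomial (Fin n) k)
    (hQ0 : ∀ i, Q i ≠ 0)
    (hQhom : ∀ i, ∃ d, (Q i).IsHomogeneous d)
    (hQdvd : ∀ i j, i ≠ j → ¬ Q i ∣ Q j)
    (L : Finset (Fin m) → MvPolynomial (Fin n) k)
    (hLdvd : ∀ σ, ∀ i ∈ σ, Q i ∣ L σ)
    (hLlcm : ∀ σ t, (∀ i ∈ σ, Q i ∣ t) → L σ ∣ t)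
    (c : Finset (Fin m) → Fin m → MvPolynomial (Fin n) k)
    (hc : ∀ σ, ∀ i ∈ σ, c σ i * L (σ.erase i) = L σ)
    (hmono : ∀ i, ∃ d : Fin n →₀ ℕ, Q i = MvPolynomial.monomial d 1) :
    IsTaylorResolution k n m Q c :=
  taylor_resolution_of_monomial_general k n m Q L hLdvd hLlcm c hc hmono
end
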